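/- Let a, b > 0 be fixed. As a → 0⁺ the distributions μ_{a,a',b} converge weakly to the Dirac measure δ₀ at 0, and as a → ∞ they converge weakly to the Dirac measure δ₁ at 1. -/

import Mathlib

open MeasureTheory ProbabilityTheory Real Set Filter Topology

noncomputable def gammaDens (p σ y : ℝ) : ℝ :=
  if 0 < y then σ ^ p / Real.Gamma p * Real.exp (-(σ * y)) * y ^ (p - 1) else 0

noncomputable def gammaM (p σ : ℝ) : Measure ℝ :=
  MeasureTheory.volume.withDensity fun y => ENNReal.ofReal (gammaDens p σ y)

noncomputable def beta1Dens (p q x : ℝ) : ℝ :=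
  if 0 < x ∧ x < 1 then
    Real.Gamma (p + q) / (Real.Gamma p * Real.Gamma q) * x ^ (p - 1) * (1 - x) ^ (q - 1)
  else 0

noncomputable def beta1 (p q : ℝ) : Measure ℝ :=
  MeasureTheory.volume.withDensity fun x => ENNReal.ofReal (beta1Dens p q x)

noncomputable def beta2Dens (p q y : ℝ) : ℝ :=
  if 0 < y then
    Real.Gamma (p + q) / (Real.Gamma p * Real.Gamma q) * y ^ (p - 1) * (1 + y) ^ (-(p + q))
  else 0

noncomputable def beta2 (p q : ℝ) : Measure ℝ :=
  MeasureTheory.volume.withDensity fun y => ENNReal.ofReal (beta2Dens p q y)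

/-- Pochhammer (rising factorial) symbol `(a)_n`. -/
noncomputable def poch (a : ℝ) (n : ℕ) : ℝ := ∏ i ∈ Finset.range n, (a + (i : ℝ))

/-- Gauss hypergeometric function `₂F₁(a,b;c;x)`. -/
noncomputable def F21 (a b c x : ℝ) : ℝ :=
  ∑' n : ℕ, poch a n * poch b n / ((n.factorial : ℝ) * poch c n) * x ^ n

/-- Generalized hypergeometric `₃F₂(a₁,a₂,a₃;b₁,b₂;1)` at unit argument. -/
noncomputable def F32one (a1 a2 a3 b1 b2 : ℝ) : ℝ :=
  ∑' n : ℕ, poch a1 n * poch a2 n * poch a3 n /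
    ((n.factorial : ℝ) * poch b1 n * poch b2 n)

/-- Normalizing constant of the real beta-hypergeometric distribution. -/
noncomputable def Cbh (a a' b : ℝ) : ℝ :=
  Real.Gamma (a + b) / (Real.Gamma a * Real.Gamma b * F32one a a b (a + b) (a + a'))

noncomputable def bhDens (a a' b x : ℝ) : ℝ :=
  if 0 < x ∧ x < 1 then
    Cbh a a' b * x ^ (a - 1) * (1 - x) ^ (b - 1) * F21 a b (a + a') x
  else 0

/-- The real beta-hypergeometric distribution `μ_{a,a',b}`. -/
noncomputable def bhMeasure (a a' b : ℝ) : Measure ℝ :=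
  MeasureTheory.volume.withDensity fun x => ENNReal.ofReal (bhDens a a' b x)

lemma poch_pos' {a : ℝ} (ha : 0 < a) (n : ℕ) : 0 < poch a n :=
  Finset.prod_pos fun i _ => by positivity

lemma poch_succ' (a : ℝ) (n : ℕ) : poch a (n + 1) = poch a n * (a + n) :=
  Finset.prod_range_succ _ _

lemma Gamma_poch {a : ℝ} (ha : 0 < a) (n : ℕ) :
    Real.Gamma (a + n) = poch a n * Real.Gamma a := by
  induction n with
  | zero => simp [poch]
  | succ n ih =>
    have h : a + ((n + 1 : ℕ) : ℝ) = (a + n) + 1 := by push_cast; ring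
    rw [h, Real.Gamma_add_one (by positivity), ih, poch_succ']
    ring

/-- Terms of the normalizing series. -/
noncomputable def tt (a a' b : ℝ) (n : ℕ) : ℝ :=
  poch a n * poch a n * poch b n / ((n.factorial : ℝ) * poch (a + b) n * poch (a + a') n)

lemma tt_pos {a a' b : ℝ} (ha : 0 < a) (ha' : 0 < a') (hb : 0 < b) (n : ℕ) :
    0 < tt a a' b n := by
  have h1 := poch_pos' ha n
  have h2 := poch_pos' hb n
  have h3 := poch_pos' (add_pos ha hb) n
  have h4 := poch_pos' (add_pos ha ha') n
  unfold tt
  positivity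

lemma tt_succ {a a' b : ℝ} (ha : 0 < a) (ha' : 0 < a') (hb : 0 < b) (n : ℕ) :
    ((n : ℝ) + 1) * tt a a' b (n + 1) =
      tt a a' b n * ((a + n) * (a + n) * (b + n) / ((a + b + n) * (a + a' + n))) := by
  have h3 := (poch_pos' (add_pos ha hb) n).ne'
  have h4 := (poch_pos' (add_pos ha ha') n).ne'
  have h5 : (n.factorial : ℝ) ≠ 0 := by positivity
  have h6 : a + b + n ≠ 0 := by positivity
  have h7 : a + a' + n ≠ 0 := by positivity
  have h8 : (n : ℝ) + 1 ≠ 0 := by positivity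
  unfold tt
  rw [poch_succ', poch_succ', poch_succ', poch_succ', Nat.factorial_succ]
  push_cast
  field_simp

lemma tt_tele {a a' b : ℝ} (ha : 0 < a) (ha' : 0 < a') (hb : 0 < b) (n : ℕ) :
    (a' * n / (a + a' + n) - a * b / (a + b + n)) * tt a a' b n ≤
      n * tt a a' b n - ((n : ℝ) + 1) * tt a a' b (n + 1) := by
  rw [tt_succ ha ha' hb]
  have h6 : 0 < a + b + n := by positivity
  have h7 : 0 < a + a' + n := by positivity
  have key : a' * n / (a + a' + n) - a * b / (a + b + n) ≤
      n - (a + n) * (a + n) * (b + n) / ((a + b + n) * (a + a' + n)) := by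
    have : (n - (a + n) * (a + n) * (b + n) / ((a + b + n) * (a + a' + n))) -
      (a' * n / (a + a' + n) - a * b / (a + b + n)) =
        a' * (a * b) / ((a + b + n) * (a + a' + n)) := by
      field_simp
      ring
    have h0 : 0 ≤ a' * (a * b) / ((a + b + n) * (a + a' + n)) := by positivity
    linarith
  nlinarith [mul_le_mul_of_nonneg_right key (tt_pos ha ha' hb n).le]

lemma tt_sum_le {a a' b : ℝ} (ha : 0 < a) (ha' : 0 < a') (hb : 0 < b) {δ : ℝ} (hδ : 0 < δ)
    (N : ℕ) (h : ∀ n : ℕ, N ≤ n → δ ≤ a' * n / (a + a' + n) - a * b / (a + b + n)) (m : ℕ) :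
    ∑ i ∈ Finset.range m, tt a a' b (i + N) ≤ N * tt a a' b N / δ := by
  have H : ∀ m : ℕ, δ * ∑ i ∈ Finset.range m, tt a a' b (i + N) ≤
      N * tt a a' b N - ((m + N : ℕ) : ℝ) * tt a a' b (m + N) := by
    intro m
    induction m with
    | zero => simp
    | succ m ih =>
      rw [Finset.sum_range_succ, mul_add]
      have h1 := tt_tele ha ha' hb (m + N)
      have h2 := mul_le_mul_of_nonneg_right (h (m + N) (by omega)) (tt_pos ha ha' hb (m + N)).le
      have h3 : m + 1 + N = m + N + 1 := by omega
      rw [h3]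
      push_cast at *
      linarith
  rw [le_div_iff₀ hδ]
  have h1 := H m
  have h2 : 0 ≤ ((m + N : ℕ) : ℝ) * tt a a' b (m + N) :=
    mul_nonneg (Nat.cast_nonneg _) (tt_pos ha ha' hb _).le
  linarith

lemma tt_summable {a a' b : ℝ} (ha : 0 < a) (ha' : 0 < a') (hb : 0 < b) :
    Summable (tt a a' b) := by
  have T : Tendsto (fun n : ℕ => a' * n / (a + a' + n) - a * b / (a + b + n)) atTop (𝓝 a') := by
    have h1 := tendsto_add_mul_div_add_mul_atTop_nhds (0 : ℝ) (a + a') a' (d := 1) one_ne_zero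
    have h2 := tendsto_add_mul_div_add_mul_atTop_nhds (a * b) (a + b) 0 (d := (1 : ℝ)) one_ne_zero
    simpa using h1.sub h2
  obtain ⟨N, hN⟩ := eventually_atTop.1 (T.eventually_const_le (show a' / 2 < a' by linarith))
  rw [← summable_nat_add_iff N]
  exact summable_of_sum_range_le (fun n => (tt_pos ha ha' hb _).le)
    (tt_sum_le ha ha' hb (half_pos ha') N hN)

lemma F32_eq (a a' b : ℝ) : F32one a a b (a + b) (a + a') = ∑' n, tt a a' b n := rfl

lemma F32_ge {a a' b : ℝ} (ha : 0 < a) (ha' : 0 < a') (hb : 0 < b) :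
    1 ≤ ∑' n, tt a a' b n := by
  have h := (tt_summable ha ha' hb).le_tsum 0 (fun n _ => (tt_pos ha ha' hb n).le)
  simpa [tt, poch] using h

lemma F21_summable {a b c x : ℝ} (ha : 0 < a) (hb : 0 < b) (hc : 0 < c) (hx : 0 < x)
    (hx1 : x < 1) :
    Summable fun n : ℕ => poch a n * poch b n / ((n.factorial : ℝ) * poch c n) * x ^ n := by
  have hpos : ∀ n : ℕ, 0 < poch a n * poch b n / ((n.factorial : ℝ) * poch c n) * x ^ n := by
    intro n
    have h1 := poch_pos' ha n
    have h2 := poch_pos' hb n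
    have h3 := poch_pos' hc n
    positivity
  refine summable_of_ratio_test_tendsto_lt_one hx1 (Eventually.of_forall fun n => (hpos n).ne') ?_
  have h1 := tendsto_add_mul_div_add_mul_atTop_nhds a c 1 (d := (1 : ℝ)) one_ne_zero
  have h2 := tendsto_add_mul_div_add_mul_atTop_nhds b 1 1 (d := (1 : ℝ)) one_ne_zero
  have h3 := (h1.mul h2).mul_const x
  simp only [one_mul, div_one] at h3
  refine h3.congr fun n => ?_
  rw [Real.norm_of_nonneg (hpos _).le, Real.norm_of_nonneg (hpos _).le]
  have h1 := (poch_pos' ha n).ne'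
  have h2 := (poch_pos' hb n).ne'
  have h3 := (poch_pos' hc n).ne'
  have h5 : (n.factorial : ℝ) ≠ 0 := by positivity
  have h6 : c + n ≠ 0 := by positivity
  have h8 : (n : ℝ) + 1 ≠ 0 := by positivity
  have h9 : 1 + (n : ℝ) ≠ 0 := by positivity
  rw [poch_succ', poch_succ', poch_succ', Nat.factorial_succ]
  push_cast
  field_simp
  ring

lemma dens_eq {a a' b : ℝ} (ha : 0 < a) (ha' : 0 < a') (hb : 0 < b) (x : ℝ) :
    ENNReal.ofReal (bhDens a a' b x) =
      ∑' n : ℕ, ENNReal.ofReal (tt a a' b n / ∑' k, tt a a' b k) * betaPDF (a + n) b x := by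
  have hS : 0 < ∑' k, tt a a' b k := lt_of_lt_of_le one_pos (F32_ge ha ha' hb)
  by_cases hx : 0 < x ∧ x < 1
  · have hterm : ∀ n : ℕ, tt a a' b n / (∑' k, tt a a' b k) * betaPDFReal (a + n) b x =
        (Cbh a a' b * x ^ (a - 1) * (1 - x) ^ (b - 1)) *
          (poch a n * poch b n / ((n.factorial : ℝ) * poch (a + a') n) * x ^ n) := by
      intro n
      have e : a + (n : ℝ) + b = (a + b) + n := by ring
      rw [betaPDFReal, if_pos hx, Cbh, F32_eq, beta, e, Gamma_poch ha, Gamma_poch (add_pos ha hb)]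
      have e2 : x ^ (a + n - 1) = x ^ (a - 1) * x ^ n := by
        rw [← Real.rpow_natCast, ← Real.rpow_add hx.1]
        congr 1
        ring
      rw [e2]
      have h1 := (poch_pos' ha n).ne'
      have h3 := (poch_pos' (add_pos ha hb) n).ne'
      have h4 := (poch_pos' (add_pos ha ha') n).ne'
      have h5 : (n.factorial : ℝ) ≠ 0 := by positivity
      have g1 := (Real.Gamma_pos_of_pos ha).ne'
      have g2 := (Real.Gamma_pos_of_pos hb).ne'
      have g3 := (Real.Gamma_pos_of_pos (add_pos ha hb)).ne'
      generalize (1 - x) ^ (b - 1) = v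
      generalize x ^ (a - 1) = u
      have hS' := hS.ne'
      generalize (∑' k, tt a a' b k) = S at *
      unfold tt
      field_simp
    have hs := (F21_summable ha hb (add_pos ha ha') hx.1 hx.2).mul_left
      (Cbh a a' b * x ^ (a - 1) * (1 - x) ^ (b - 1))
    have hnn : ∀ n : ℕ, 0 ≤ tt a a' b n / (∑' k, tt a a' b k) :=
      fun n => div_nonneg (tt_pos ha ha' hb n).le hS.le
    rw [bhDens, if_pos hx, F21, ← tsum_mul_left]
    simp_rw [← hterm] at hs ⊢
    rw [ENNReal.ofReal_tsum_of_nonneg _ hs]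
    · refine tsum_congr fun n => ?_
      rw [ENNReal.ofReal_mul (hnn n), betaPDF]
    · exact fun n => mul_nonneg (hnn n) (betaPDFReal_pos hx.1 hx.2 (by positivity) hb).le
  · simp [bhDens, betaPDF, betaPDFReal, hx]

lemma measurable_betaPDF' (p q : ℝ) : Measurable (betaPDF p q) :=
  (measurable_betaPDFReal p q).ennreal_ofReal

lemma lint_bh {a a' b : ℝ} (ha : 0 < a) (ha' : 0 < a') (hb : 0 < b) {w : ℝ → ENNReal}
    (hw : Measurable w) :
    ∫⁻ x, w x ∂(bhMeasure a a' b) =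
      ∑' n : ℕ, ENNReal.ofReal (tt a a' b n / ∑' k, tt a a' b k) *
        ∫⁻ x, betaPDF (a + n) b x * w x := by
  have hm : ∀ n : ℕ, Measurable fun x =>
      ENNReal.ofReal (tt a a' b n / ∑' k, tt a a' b k) * betaPDF (a + n) b x :=
    fun n => (measurable_betaPDF' _ _).const_mul _
  unfold bhMeasure
  simp_rw [dens_eq ha ha' hb]
  rw [lintegral_withDensity_eq_lintegral_mul _ (Measurable.tsum hm) hw]
  simp only [Pi.mul_apply, ← ENNReal.tsum_mul_right]
  rw [lintegral_tsum fun n => Measurable.aemeasurable (by exact (hm n).mul hw)]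
  refine tsum_congr fun n => ?_
  simp_rw [mul_assoc]
  exact lintegral_const_mul _ ((measurable_betaPDF' _ _).mul hw)

lemma weights_sum {a a' b : ℝ} (ha : 0 < a) (ha' : 0 < a') (hb : 0 < b) :
    ∑' n : ℕ, ENNReal.ofReal (tt a a' b n / ∑' k, tt a a' b k) = 1 := by
  have hS : 0 < ∑' k, tt a a' b k := lt_of_lt_of_le one_pos (F32_ge ha ha' hb)
  rw [← ENNReal.ofReal_tsum_of_nonneg (fun n => div_nonneg (tt_pos ha ha' hb n).le hS.le)
    ((tt_summable ha ha' hb).div_const _), tsum_div_const, div_self hS.ne', ENNReal.ofReal_one]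

lemma bh_prob {a a' b : ℝ} (ha : 0 < a) (ha' : 0 < a') (hb : 0 < b) :
    IsProbabilityMeasure (bhMeasure a a' b) := by
  constructor
  rw [← lintegral_one, lint_bh ha ha' hb measurable_const]
  simp only [mul_one]
  rw [← weights_sum ha ha' hb]
  refine tsum_congr fun n => ?_
  rw [lintegral_betaPDF_eq_one (by positivity) hb, mul_one]

lemma beta_mean_zero {p q : ℝ} (hp : 0 < p) (hq : 0 < q) :
    ∫⁻ x, betaPDF p q x * ENNReal.ofReal |x - 0| = ENNReal.ofReal (p / (p + q)) := by
  have : ∀ x, betaPDF p q x * ENNReal.ofReal |x - 0| =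
      ENNReal.ofReal (p / (p + q)) * betaPDF (p + 1) q x := by
    intro x
    by_cases hx : 0 < x ∧ x < 1
    · rw [betaPDF, betaPDF, ← ENNReal.ofReal_mul (betaPDFReal_pos hx.1 hx.2 hp hq).le,
        ← ENNReal.ofReal_mul (by positivity), sub_zero, abs_of_pos hx.1]
      congr 1
      rw [betaPDFReal, betaPDFReal, if_pos hx, if_pos hx, beta, beta,
        show p + 1 + q = (p + q) + 1 by ring, Real.Gamma_add_one hp.ne',
        Real.Gamma_add_one (by positivity : p + q ≠ 0),
        show p + 1 - 1 = (p - 1) + 1 by ring, Real.rpow_add_one hx.1.ne']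
      have g1 := (Real.Gamma_pos_of_pos hp).ne'
      have g2 := (Real.Gamma_pos_of_pos hq).ne'
      have g3 := (Real.Gamma_pos_of_pos (add_pos hp hq)).ne'
      have g4 : p + q ≠ 0 := by positivity
      generalize (1 - x) ^ (q - 1) = v
      generalize x ^ (p - 1) = u
      field_simp
    · simp [betaPDF, betaPDFReal, hx]
  simp_rw [this]
  rw [lintegral_const_mul _ (measurable_betaPDF' _ _),
    lintegral_betaPDF_eq_one (by positivity) hq, mul_one]

lemma beta_mean_one {p q : ℝ} (hp : 0 < p) (hq : 0 < q) :
    ∫⁻ x, betaPDF p q x * ENNReal.ofReal |x - 1| = ENNReal.ofReal (q / (p + q)) := by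
  have : ∀ x, betaPDF p q x * ENNReal.ofReal |x - 1| =
      ENNReal.ofReal (q / (p + q)) * betaPDF p (q + 1) x := by
    intro x
    by_cases hx : 0 < x ∧ x < 1
    · have hx' : 0 < 1 - x := by linarith [hx.2]
      rw [betaPDF, betaPDF, ← ENNReal.ofReal_mul (betaPDFReal_pos hx.1 hx.2 hp hq).le,
        ← ENNReal.ofReal_mul (by positivity), abs_sub_comm, abs_of_pos hx']
      congr 1
      rw [betaPDFReal, betaPDFReal, if_pos hx, if_pos hx, beta, beta,
        show p + (q + 1) = (p + q) + 1 by ring, Real.Gamma_add_one hq.ne',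
        Real.Gamma_add_one (by positivity : p + q ≠ 0),
        show q + 1 - 1 = (q - 1) + 1 by ring, Real.rpow_add_one hx'.ne']
      have g1 := (Real.Gamma_pos_of_pos hp).ne'
      have g2 := (Real.Gamma_pos_of_pos hq).ne'
      have g3 := (Real.Gamma_pos_of_pos (add_pos hp hq)).ne'
      have g4 : p + q ≠ 0 := by positivity
      generalize (1 - x) ^ (q - 1) = v
      generalize x ^ (p - 1) = u
      field_simp
    · simp [betaPDF, betaPDFReal, hx]
  simp_rw [this]
  rw [lintegral_const_mul _ (measurable_betaPDF' _ _),
    lintegral_betaPDF_eq_one hp (by positivity), mul_one]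

lemma dirac_of_mean {l : Filter ℝ} {μ : ℝ → Measure ℝ} {c : ℝ} {r : ℝ → ℝ}
    (hμ : ∀ᶠ a in l, IsProbabilityMeasure (μ a))
    (hr : ∀ᶠ a in l, ∫⁻ x, ENNReal.ofReal |x - c| ∂(μ a) ≤ ENNReal.ofReal (r a))
    (hr0 : Tendsto r l (𝓝 0)) (f : BoundedContinuousFunction ℝ ℝ) :
    Tendsto (fun a => ∫ x, f x ∂(μ a)) l (𝓝 (f c)) := by
  rw [Metric.tendsto_nhds]
  intro ε hε
  obtain ⟨δ, hδ, hfδ⟩ := Metric.continuous_iff.1 f.continuous c (ε / 2) (half_pos hε)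
  set K : ℝ := 2 * ‖f‖ / δ with hK
  have hK0 : 0 ≤ K := by positivity
  have hpt : ∀ x, |f x - f c| ≤ ε / 2 + K * |x - c| := by
    intro x
    by_cases hx : |x - c| < δ
    · have h := (hfδ x hx).le
      rw [Real.dist_eq] at h
      have : 0 ≤ K * |x - c| := by positivity
      linarith
    · have h1 : |f x - f c| ≤ 2 * ‖f‖ := by
        have := f.dist_le_two_norm x c
        rwa [Real.dist_eq] at this
      have h2 : 2 * ‖f‖ = K * δ := by rw [hK]; field_simp
      have h3 : K * δ ≤ K * |x - c| := mul_le_mul_of_nonneg_left (not_lt.1 hx) hK0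
      linarith
  have hlim : Tendsto (fun a => K * max (r a) 0) l (𝓝 0) := by
    simpa using (hr0.max (tendsto_const_nhds (x := (0 : ℝ)))).const_mul K
  filter_upwards [hμ, hr, hlim.eventually_lt_const (half_pos hε)] with a h1 h2 h3
  have hint : Integrable (fun x => |x - c|) (μ a) := by
    refine ⟨by fun_prop, ?_⟩
    rw [hasFiniteIntegral_iff_ofReal (Eventually.of_forall fun x => abs_nonneg _)]
    exact h2.trans_lt ENNReal.ofReal_lt_top
  have hbd : ∫ x, |x - c| ∂(μ a) ≤ max (r a) 0 := by
    rw [integral_eq_lintegral_of_nonneg_ae (Eventually.of_forall fun x => abs_nonneg _)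
      (by fun_prop)]
    refine (ENNReal.toReal_mono ENNReal.ofReal_ne_top h2).trans ?_
    rw [ENNReal.toReal_ofReal']
  have hf : Integrable f (μ a) := f.integrable _
  rw [Real.dist_eq]
  have e : ∫ x, f x ∂(μ a) - f c = ∫ x, (f x - f c) ∂(μ a) := by
    rw [integral_sub hf (integrable_const _)]
    simp
  rw [e]
  calc |∫ x, (f x - f c) ∂(μ a)| ≤ ∫ x, |f x - f c| ∂(μ a) := abs_integral_le_integral_abs
    _ ≤ ∫ x, (ε / 2 + K * |x - c|) ∂(μ a) :=
        integral_mono (hf.sub (integrable_const _)).abs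
          ((integrable_const _).add (hint.const_mul K)) hpt
    _ = ε / 2 + K * ∫ x, |x - c| ∂(μ a) := by
        rw [integral_add (integrable_const _) (hint.const_mul K), integral_const_mul]
        simp
    _ ≤ ε / 2 + K * max (r a) 0 := by gcongr
    _ < ε := by linarith

lemma mean_one_le {a a' b : ℝ} (ha : 0 < a) (ha' : 0 < a') (hb : 0 < b) :
    ∫⁻ x, ENNReal.ofReal |x - 1| ∂(bhMeasure a a' b) ≤ ENNReal.ofReal (b / (a + b)) := by
  rw [lint_bh ha ha' hb (by fun_prop)]
  calc _ ≤ ∑' n : ℕ, ENNReal.ofReal (tt a a' b n / ∑' k, tt a a' b k) *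
        ENNReal.ofReal (b / (a + b)) := by
        refine ENNReal.tsum_le_tsum fun n => ?_
        rw [beta_mean_one (by positivity) hb]
        gcongr
        linarith [Nat.cast_nonneg (α := ℝ) n]
    _ = _ := by rw [ENNReal.tsum_mul_right, weights_sum ha ha' hb, one_mul]

lemma mean_zero_le {a a' b : ℝ} (ha : 0 < a) (ha' : 0 < a') (hb : 0 < b)
    (hδ : 0 < a' / (a + a' + 1) - a) :
    ∫⁻ x, ENNReal.ofReal |x - 0| ∂(bhMeasure a a' b) ≤
      ENNReal.ofReal (a / (a + b) + a / (a' / (a + a' + 1) - a)) := by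
  have hS1 := F32_ge ha ha' hb
  rw [lint_bh ha ha' hb (by fun_prop)]
  have hb1 := tt_sum_le ha ha' hb hδ 1 (by
    intro n hn
    have hn' : (1 : ℝ) ≤ n := by exact_mod_cast hn
    have i1 : a' / (a + a' + 1) ≤ a' * n / (a + a' + n) := by
      rw [div_le_div_iff₀ (by positivity) (by positivity)]
      nlinarith [mul_nonneg (mul_pos ha' (add_pos ha ha')).le (sub_nonneg.2 hn')]
    have i2 : a * b / (a + b + n) ≤ a := by
      rw [div_le_iff₀ (by positivity)]
      nlinarith
    linarith)
  have ht1 : tt a a' b 1 ≤ a := by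
    have h := tt_succ ha ha' hb 0
    have h0 : tt a a' b 0 = 1 := by simp [tt, poch]
    simp only [h0, Nat.cast_zero, zero_add, add_zero, one_mul] at h
    rw [h, div_le_iff₀ (by positivity)]
    nlinarith [mul_pos ha ha', mul_pos ha hb, mul_pos ha (mul_pos ha ha'), mul_pos ha (mul_pos ha ha), mul_pos ha (mul_pos hb ha')]
  rw [tsum_eq_zero_add' ENNReal.summable, ENNReal.ofReal_add (by positivity) (by positivity)]
  refine add_le_add ?_ ?_
  · rw [beta_mean_zero (by positivity) hb, ← one_mul (ENNReal.ofReal (a / (a + b)))]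
    simp only [Nat.cast_zero, add_zero]
    gcongr
    rw [← weights_sum ha ha' hb]
    exact ENNReal.le_tsum 0
  · calc _ ≤ ∑' n : ℕ, ENNReal.ofReal (tt a a' b (n + 1)) := by
          refine ENNReal.tsum_le_tsum fun n => ?_
          rw [beta_mean_zero (by positivity) hb, ← mul_one (ENNReal.ofReal (tt a a' b (n + 1)))]
          gcongr
          · exact div_le_self (tt_pos ha ha' hb _).le hS1
          · rw [← ENNReal.ofReal_one]
            apply ENNReal.ofReal_le_ofReal
            rw [div_le_one (by positivity)]
            linarith
      _ = ENNReal.ofReal (∑' n : ℕ, tt a a' b (n + 1)) :=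
          (ENNReal.ofReal_tsum_of_nonneg (fun n => (tt_pos ha ha' hb _).le)
            ((summable_nat_add_iff 1).2 (tt_summable ha ha' hb))).symm
      _ ≤ _ := by
          apply ENNReal.ofReal_le_ofReal
          refine (Real.tsum_le_of_sum_range_le (fun n => (tt_pos ha ha' hb _).le) hb1).trans ?_
          gcongr
          simpa using ht1

theorem bh_dirac_limits (a' b : ℝ) (ha' : 0 < a') (hb : 0 < b) :
    (∀ f : BoundedContinuousFunction ℝ ℝ,
        Filter.Tendsto (fun a : ℝ => ∫ x, f x ∂(bhMeasure a a' b))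
          (nhdsWithin 0 (Set.Ioi 0)) (nhds (f 0))) ∧
    (∀ f : BoundedContinuousFunction ℝ ℝ,
        Filter.Tendsto (fun a : ℝ => ∫ x, f x ∂(bhMeasure a a' b))
          Filter.atTop (nhds (f 1))) := by
  constructor
  · intro f
    have hne : (0 : ℝ) + a' + 1 ≠ 0 := by positivity
    have hT : Tendsto (fun a : ℝ => a' / (a + a' + 1) - a) (𝓝 0) (𝓝 (a' / (0 + a' + 1) - 0)) := by
      have : ContinuousAt (fun a : ℝ => a' / (a + a' + 1) - a) 0 := by
        fun_prop (disch := assumption)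
      exact this
    have hpos : 0 < a' / (0 + a' + 1) - 0 := by
      rw [sub_zero]
      positivity
    have hid : Tendsto (fun a : ℝ => a) (𝓝 0) (𝓝 0) := tendsto_id
    have hev : ∀ᶠ a in 𝓝[>] (0 : ℝ), 0 < a' / (a + a' + 1) - a :=
      (hT.mono_left nhdsWithin_le_nhds).eventually_const_lt hpos
    have hp : ∀ᶠ a in 𝓝[>] (0 : ℝ), 0 < a := self_mem_nhdsWithin
    refine dirac_of_mean (r := fun a => a / (a + b) + a / (a' / (a + a' + 1) - a)) ?_ ?_ ?_ f
    · filter_upwards [hp] with a ha using bh_prob ha ha' hb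
    · filter_upwards [hp, hev] with a ha h using mean_zero_le ha ha' hb h
    · have h1 := hid.div (hid.add_const b) (by simpa using hb.ne')
      have h2 := hid.div hT hpos.ne'
      have h3 := (h1.add h2).mono_left (nhdsWithin_le_nhds (s := Set.Ioi (0 : ℝ)))
      simpa using h3
  · intro f
    refine dirac_of_mean (r := fun a => b / (a + b)) ?_ ?_ ?_ f
    · filter_upwards [eventually_gt_atTop 0] with a ha using bh_prob ha ha' hb
    · filter_upwards [eventually_gt_atTop 0] with a ha using mean_one_le ha ha' hb
    · exact (tendsto_atTop_add_const_right _ b tendsto_id).const_div_atTop b
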